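/- For every ε > 0 there exists a constant C = C(ε) > 0 with the following property. Let Q be a primitive positive-definite quaternary integer-valued quadratic form with Gram matrix A, level N = N(Q), and discriminant D = det A. For each positive divisor c of N set w_c = N / gcd(c², N) and m_c = #{ y ∈ ℤ⁴/Aℤ⁴ : c·y = 0 } (the order of the c-torsion subgroup of the discriminant group, which has order D). Then ∑_{c | N} φ(gcd(c, N/c)) · w_c² · m_c ≤ C · D^(1+ε) · N · ∏_{p | N, p prime} (1 + 1/p), where φ is Euler's totient function. Equivalently, [SL₂(ℤ) : Γ₀(N)]⁻¹ times the sum over cusps a/c of Γ₀(N) of w²/|D^c| is at most C·D^ε, where |D^c| = D/m_c. -/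

import Mathlib

open scoped BigOperators

/-- Value of the quadratic form with Gram matrix `A` (symmetric, even diagonal)
over any commutative ring: `Q(x) = ∑ (aᵢᵢ/2) xᵢ² + ∑_{i<j} aᵢⱼ xᵢ xⱼ`. -/
def Qval {R : Type*} [CommRing R] (A : Matrix (Fin 4) (Fin 4) ℤ) (x : Fin 4 → R) : R :=
  (∑ i, ((A i i / 2 : ℤ) : R) * x i ^ 2) +
    ∑ i, ∑ j ∈ Finset.Ioi i, ((A i j : ℤ) : R) * (x i * x j)

/-- `A` is the Gram matrix of an integer-valued quadratic form. -/
def IsGram (A : Matrix (Fin 4) (Fin 4) ℤ) : Prop :=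
  A.IsSymm ∧ ∀ i, 2 ∣ A i i

/-- The form is primitive: the gcd of its coefficients is 1. -/
def IsPrimitiveQF (A : Matrix (Fin 4) (Fin 4) ℤ) : Prop :=
  ∀ d : ℤ, (∀ i, d ∣ A i i / 2) → (∀ i j, i ≠ j → d ∣ A i j) → IsUnit d

/-- The form is positive definite. -/
def PosDefQF (A : Matrix (Fin 4) (Fin 4) ℤ) : Prop :=
  (A.map (Int.cast : ℤ → ℝ)).PosDef

/-- `N` is the level of the form with Gram matrix `A`: the smallest positive integer
such that `N • A⁻¹` has integer entries and even diagonal. -/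
def IsLevel (A : Matrix (Fin 4) (Fin 4) ℤ) (N : ℕ) : Prop :=
  0 < N ∧
    (∃ B : Matrix (Fin 4) (Fin 4) ℤ,
      B.map (Int.cast : ℤ → ℚ) = (N : ℚ) • (A.map (Int.cast : ℤ → ℚ))⁻¹ ∧ ∀ i, 2 ∣ B i i) ∧
    ∀ M : ℕ, 0 < M →
      (∃ B : Matrix (Fin 4) (Fin 4) ℤ,
        B.map (Int.cast : ℤ → ℚ) = (M : ℚ) • (A.map (Int.cast : ℤ → ℚ))⁻¹ ∧ ∀ i, 2 ∣ B i i) →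
      N ≤ M

/-- `n` is represented by the form over `ℤ`. -/
def Represented (A : Matrix (Fin 4) (Fin 4) ℤ) (n : ℕ) : Prop :=
  ∃ x : Fin 4 → ℤ, Qval A x = (n : ℤ)

/-- `n` is locally represented: representable over `ℤ_p` for every prime `p`. -/
def LocallyRepresented (A : Matrix (Fin 4) (Fin 4) ℤ) (n : ℕ) : Prop :=
  ∀ (p : ℕ) [Fact p.Prime], ∃ x : Fin 4 → ℤ_[p], Qval A x = (n : ℤ_[p])

/-- Number of solutions of `Q(x) ≡ n mod p^k`. -/
noncomputable def localCount (A : Matrix (Fin 4) (Fin 4) ℤ) (p n k : ℕ) : ℕ :=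
  Nat.card {x : Fin 4 → ZMod (p ^ k) // Qval A x = (n : ZMod (p ^ k))}

/-- The local density `β_p(Q;n)` exists and is at least `c`. -/
def DensityBound (A : Matrix (Fin 4) (Fin 4) ℤ) (p n : ℕ) (c : ℝ) : Prop :=
  ∃ β : ℝ,
    Filter.Tendsto (fun k => (localCount A p n k : ℝ) / (p : ℝ) ^ (3 * k))
      Filter.atTop (nhds β) ∧ c ≤ β


/-- The order of the `c`-torsion subgroup of the discriminant group `ℤ⁴/Aℤ⁴`. -/
noncomputable def torsionCount (A : Matrix (Fin 4) (Fin 4) ℤ) (c : ℕ) : ℕ :=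
  Nat.card {y : (Fin 4 → ℤ) ⧸ LinearMap.range (Matrix.mulVecLin A) // c • y = 0}

/-- The discriminant group has order `det A`. -/
lemma card_discGroup (A : Matrix (Fin 4) (Fin 4) ℤ) (hdet : A.det ≠ 0) :
    Nat.card ((Fin 4 → ℤ) ⧸ LinearMap.range (Matrix.mulVecLin A)) = A.det.natAbs := by
  have hinj : Function.Injective (Matrix.mulVecLin A) := by
    have := Matrix.mulVec_injective_of_det_ne_zero hdet
    exact this
  rw [← Submodule.natAbs_det_equiv _ (LinearEquiv.ofInjective _ hinj)]
  congr 1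
  rw [← LinearMap.det_toLin' A]
  congr 1

/-- In a finite abelian group, `|G[c]| * exp(G) ≤ c * |G|`. -/
lemma torsion_mul_exponent_le (G : Type*) [AddCommGroup G] [Finite G] (c : ℕ) (hc : 0 < c) :
    Nat.card {y : G // c • y = 0} * AddMonoid.exponent G ≤ c * Nat.card G := by
  obtain ⟨x, hx⟩ := AddMonoid.exists_addOrderOf_eq_exponent
    (AddMonoid.ExponentExists.of_finite (G := G))
  let f : G →+ G := nsmulAddMonoidHom c
  have h1 : Nat.card {y : G // c • y = 0} = Nat.card f.ker := rfl
  have h2 : Nat.card f.ker * Nat.card f.range = Nat.card G := by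
    rw [← AddSubgroup.index_ker, AddSubgroup.card_mul_index]
  have h3 : addOrderOf (c • x) ≤ Nat.card f.range := by
    rw [← Nat.card_zmultiples]
    refine Nat.card_le_card_of_injective
      (AddSubgroup.inclusion (?_ : AddSubgroup.zmultiples (c • x) ≤ f.range))
      (AddSubgroup.inclusion_injective _)
    rw [AddSubgroup.zmultiples_le]
    exact ⟨x, rfl⟩
  have h4 : addOrderOf x ≤ c * addOrderOf (c • x) := by
    apply Nat.le_of_dvd (Nat.mul_pos hc (addOrderOf_pos _))
    rw [addOrderOf_dvd_iff_nsmul_eq_zero, mul_comm, mul_smul, addOrderOf_nsmul_eq_zero]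
  rw [← hx, h1, ← h2]
  calc _ ≤ Nat.card f.ker * (c * Nat.card f.range) := by gcongr; exact h4.trans (by gcongr)
    _ = _ := by ring

lemma level_le (A : Matrix (Fin 4) (Fin 4) ℤ) (N e : ℕ) (hdet : A.det ≠ 0) (hN : IsLevel A N)
    (he : 0 < e)
    (h : ∀ y : (Fin 4 → ℤ) ⧸ LinearMap.range (Matrix.mulVecLin A), e • y = 0) : N ≤ 2 * e := by
  have h1 : ∀ j : Fin 4, ∃ b : Fin 4 → ℤ, A.mulVec b = e • (Pi.single j 1 : Fin 4 → ℤ) := by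
    intro j
    have h2 := h (Submodule.Quotient.mk (Pi.single j 1))
    rw [← Submodule.Quotient.mk_smul, Submodule.Quotient.mk_eq_zero] at h2
    exact h2
  choose b hb using h1
  let B : Matrix (Fin 4) (Fin 4) ℤ := fun i j => b j i
  have hAB : A * B = (e : ℤ) • (1 : Matrix (Fin 4) (Fin 4) ℤ) := by
    ext i j
    have := congrFun (hb j) i
    simp only [Matrix.mulVec, dotProduct, Pi.smul_apply, Pi.single_apply] at this
    rw [Matrix.mul_apply]
    change ∑ x, A i x * b j x = _
    rw [this]
    simp [Matrix.one_apply]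
  have hAB' : A.map (Int.cast : ℤ → ℚ) * B.map (Int.cast : ℤ → ℚ) = (e : ℚ) • 1 := by
    have h3 := congrArg (fun M => M.map (Int.castRingHom ℚ)) hAB
    simp only [Matrix.map_mul] at h3
    refine Eq.trans h3 ?_
    ext i j
    rw [Matrix.map_apply, Matrix.smul_apply, Matrix.smul_apply, Matrix.one_apply, Matrix.one_apply]
    by_cases hij : i = j <;> simp [hij]
  have hdet' : IsUnit (A.map (Int.cast : ℤ → ℚ)).det := by
    have h3 : ((A.det : ℤ) : ℚ) = (A.map (Int.cast : ℤ → ℚ)).det := Int.cast_det A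
    rw [← h3]
    exact isUnit_iff_ne_zero.2 (by exact_mod_cast hdet)
  refine hN.2.2 (2 * e) (by omega) ⟨(2 : ℤ) • B, ?_, fun i => ?_⟩
  · have h4 : B.map (Int.cast : ℤ → ℚ) = (e : ℚ) • (A.map (Int.cast : ℤ → ℚ))⁻¹ := by
      have h5 := congrArg (fun M => (A.map (Int.cast : ℤ → ℚ))⁻¹ * M) hAB'
      simpa [Matrix.nonsing_inv_mul_cancel_left _ _ hdet'] using h5
    have h6 : ((2 : ℤ) • B).map (Int.cast : ℤ → ℚ) = (2 : ℚ) • B.map (Int.cast : ℤ → ℚ) := by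
      ext i j
      rw [Matrix.map_apply, Matrix.smul_apply, Matrix.smul_apply, Matrix.map_apply,
        smul_eq_mul, smul_eq_mul]
      push_cast
      rfl
    rw [h6, h4, smul_smul]
    push_cast
    rfl
  · exact ⟨B i i, by rw [Matrix.smul_apply, smul_eq_mul]⟩

lemma det_pos_of (A : Matrix (Fin 4) (Fin 4) ℤ) (h : PosDefQF A) : 0 < A.det := by
  have h1 := Matrix.PosDef.det_pos h
  have h3 : ((A.det : ℤ) : ℝ) = (A.map (Int.cast : ℤ → ℝ)).det := Int.cast_det A
  rw [← h3] at h1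
  exact_mod_cast h1

/-- The bound for one cusp denominator. -/
lemma term_bound (N c m : ℕ) (D : ℝ) (hN : 0 < N) (hc : c ∣ N)
    (hm : (m : ℝ) * N ≤ 2 * c * D) :
    ((Nat.totient (Nat.gcd c (N / c)) * (N / Nat.gcd (c ^ 2) N) ^ 2 * m : ℕ) : ℝ) ≤
      2 * D * N * (c : ℝ)⁻¹ := by
  obtain ⟨k, rfl⟩ := hc
  have hc0 : 0 < c := Nat.pos_of_mul_pos_right hN
  have hk0 : 0 < k := Nat.pos_of_mul_pos_left hN
  have e1 : c * k / c = k := Nat.mul_div_cancel_left k hc0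
  have e2 : Nat.gcd (c ^ 2) (c * k) = c * Nat.gcd c k := by rw [pow_two, Nat.gcd_mul_left]
  rw [e1, e2]
  obtain ⟨g, hg⟩ : ∃ g, g = Nat.gcd c k := ⟨_, rfl⟩
  have hg0 : 0 < g := hg ▸ Nat.gcd_pos_of_pos_left _ hc0
  obtain ⟨l, hl⟩ : g ∣ k := hg ▸ Nat.gcd_dvd_right c k
  rw [← hg]
  have e3 : c * k / (c * g) = l := by
    rw [Nat.mul_div_mul_left _ _ hc0, hl, Nat.mul_div_cancel_left _ hg0]
  rw [e3]
  subst hl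
  have hl0 : 0 < l := Nat.pos_of_mul_pos_left hk0
  have ht : ((Nat.totient g : ℕ) : ℝ) ≤ g := by exact_mod_cast Nat.totient_le g
  have hcR : (0 : ℝ) < c := by exact_mod_cast hc0
  have hgR : (1 : ℝ) ≤ g := by exact_mod_cast hg0
  have hlR : (0 : ℝ) < l := by exact_mod_cast hl0
  push_cast at hm ⊢
  have hm2 : (m : ℝ) * (g * l) ≤ 2 * D := by
    have : (c : ℝ) * (m * (g * l)) ≤ c * (2 * D) := by linarith
    exact le_of_mul_le_mul_left this hcR
  have hm0 : (0 : ℝ) ≤ m := Nat.cast_nonneg m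
  calc (Nat.totient g : ℝ) * (l : ℝ) ^ 2 * m ≤ g * (l : ℝ) ^ 2 * m := by gcongr
    _ = ((m : ℝ) * (g * l)) * (1 * l) := by ring
    _ ≤ (2 * D) * (g * l) := by
        have : 0 ≤ (m : ℝ) * (g * l) := by positivity
        gcongr
        linarith
    _ = 2 * D * (c * (g * l)) * (c : ℝ)⁻¹ := by field_simp

lemma sum_inv_divisors_le (N : ℕ) :
    ∑ c ∈ N.divisors, (c : ℝ)⁻¹ ≤ 1 + Real.log N := by
  refine le_trans ?_ (harmonic_le_one_add_log N)
  rw [harmonic_eq_sum_Icc]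
  push_cast
  apply Finset.sum_le_sum_of_subset_of_nonneg
  · intro c hc
    rw [Finset.mem_Icc]
    exact ⟨Nat.pos_of_mem_divisors hc, Nat.divisor_le hc⟩
  · intros; positivity

/-- Lemma 4 of Rouse: `∑_{c | N} φ(gcd(c,N/c)) w_c² |D_c| ≪ D^{1+ε} · N ∏_{p|N} (1+1/p)`,
i.e. the average of `w²/|D^c|` over the cusps of `Γ₀(N)` is `≪ D^ε`. -/
theorem cusp_width_sum_bound :
    ∀ ε : ℝ, 0 < ε → ∃ C : ℝ, 0 < C ∧
      ∀ (A : Matrix (Fin 4) (Fin 4) ℤ) (N : ℕ),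
        IsGram A → IsPrimitiveQF A → PosDefQF A → IsLevel A N →
        ((∑ c ∈ N.divisors,
            Nat.totient (Nat.gcd c (N / c)) * (N / Nat.gcd (c ^ 2) N) ^ 2 *
              torsionCount A c : ℕ) : ℝ) ≤
          C * (A.det : ℝ) ^ ((1:ℝ) + ε) * (N : ℝ) *
            ∏ p ∈ N.primeFactors, (1 + 1 / (p : ℝ)) := by
  intro ε hε
  refine ⟨2 * (1 + 2 ^ ε / ε), by positivity, ?_⟩
  intro A N _ _ hpos hN
  have hdet := det_pos_of A hpos
  have hN0 : 0 < N := hN.1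
  have hcard := card_discGroup A hdet.ne'
  have hfin : Finite ((Fin 4 → ℤ) ⧸ LinearMap.range (Matrix.mulVecLin A)) := by
    apply Nat.finite_of_card_ne_zero
    rw [hcard]
    simpa using hdet.ne'
  obtain ⟨e, he⟩ : ∃ e, e = AddMonoid.exponent
    ((Fin 4 → ℤ) ⧸ LinearMap.range (Matrix.mulVecLin A)) := ⟨_, rfl⟩
  have he0 : 0 < e := he ▸ Nat.pos_of_ne_zero AddMonoid.exponent_ne_zero_of_finite
  have hNe : N ≤ 2 * e := level_le A N e hdet.ne' hN he0 fun y => by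
    rw [he]; exact AddMonoid.exponent_nsmul_eq_zero y
  have hDcast : ((A.det.natAbs : ℕ) : ℝ) = (A.det : ℝ) := by
    rw [Nat.cast_natAbs, abs_of_pos hdet]
  have htors : ∀ c : ℕ, 0 < c → (torsionCount A c : ℝ) * N ≤ 2 * c * (A.det : ℝ) := by
    intro c hc
    have h1 := torsion_mul_exponent_le
      ((Fin 4 → ℤ) ⧸ LinearMap.range (Matrix.mulVecLin A)) c hc
    rw [hcard, ← he] at h1
    change torsionCount A c * e ≤ _ at h1
    rw [← hDcast]
    have h2 : torsionCount A c * N ≤ 2 * c * A.det.natAbs := by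
      calc _ ≤ torsionCount A c * (2 * e) := by gcongr
        _ = 2 * (torsionCount A c * e) := by ring
        _ ≤ 2 * (c * A.det.natAbs) := by gcongr
        _ = _ := by ring
    exact_mod_cast h2
  have hND : (N : ℝ) ≤ 2 * (A.det : ℝ) := by
    have h1 : e ≤ A.det.natAbs := by
      apply Nat.le_of_dvd (by omega)
      rw [← hcard, he]
      exact AddGroup.exponent_dvd_nat_card
    rw [← hDcast]
    exact_mod_cast hNe.trans (by omega)
  obtain ⟨D, hD⟩ : ∃ D : ℝ, D = (A.det : ℝ) := ⟨_, rfl⟩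
  have hD1 : 1 ≤ D := by rw [hD]; exact_mod_cast hdet
  rw [← hD] at htors hND ⊢
  have hNR : (0 : ℝ) < N := by exact_mod_cast hN0
  have hlog : 1 + Real.log N ≤ (1 + 2 ^ ε / ε) * D ^ ε := by
    have h1 : Real.log N ≤ (N : ℝ) ^ ε / ε := Real.log_le_rpow_div hNR.le hε
    have h2 : (N : ℝ) ^ ε ≤ 2 ^ ε * D ^ ε := by
      rw [← Real.mul_rpow (by norm_num) (by linarith)]
      exact Real.rpow_le_rpow hNR.le hND hε.le
    have h3 : 1 ≤ D ^ ε := Real.one_le_rpow hD1 hε.le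
    have h4 : (N : ℝ) ^ ε / ε ≤ 2 ^ ε * D ^ ε / ε := by gcongr
    calc _ ≤ D ^ ε + 2 ^ ε * D ^ ε / ε := by linarith
      _ = _ := by ring
  have hprod : 1 ≤ ∏ p ∈ N.primeFactors, (1 + 1 / (p : ℝ)) := by
    refine Finset.one_le_prod fun p _ => ?_
    have : (0 : ℝ) ≤ 1 / (p : ℝ) := by positivity
    linarith
  rw [Nat.cast_sum]
  calc _ ≤ ∑ c ∈ N.divisors, 2 * D * N * (c : ℝ)⁻¹ :=
        Finset.sum_le_sum fun c hc => term_bound N c _ D hN0 (Nat.dvd_of_mem_divisors hc) 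
          (htors c (Nat.pos_of_mem_divisors hc))
    _ = 2 * D * N * ∑ c ∈ N.divisors, (c : ℝ)⁻¹ := by rw [Finset.mul_sum]
    _ ≤ 2 * D * N * ((1 + 2 ^ ε / ε) * D ^ ε) := by
        gcongr
        exact (sum_inv_divisors_le N).trans hlog
    _ = 2 * (1 + 2 ^ ε / ε) * D ^ ((1:ℝ) + ε) * N := by
        rw [Real.rpow_add (by linarith), Real.rpow_one]; ring
    _ ≤ _ := le_mul_of_one_le_right (by positivity) hprod
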